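/- arXiv:1302.4670 — 5 statements merged into one kernel-verified Lean document; each statement's English description precedes it below -/
import Mathlib

section
/- Let t, r, n, m, λ be natural numbers with 1 ≤ t ≤ r ≤ n, 1 ≤ m ≤ n and λ ≥ 1, and let 𝓑 be an S_λ(t,r,n) block design on Fin n. For a finite multiset 𝓑 of subsets of Fin n define, for each subset A of Fin n, T_𝓑(A) = Σ_{B ∈ 𝓑, |B ∩ A| ≥ t} (|B ∩ A| − t + 1) (the sum taken with multiplicity of blocks), and define T_𝓑 to be the maximum of T_𝓑(A) over all m-element subsets A of Fin n. Let 𝓒 be the complete block design consisting of all r-element subsets of Fin n, and let λ* = C(n−t, r−t). Then λ* · T_𝓑 ≥ λ · T_𝓒. -/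
/-- The quantity `T(A) = ∑_{B ∈ 𝓑, |B ∩ A| ≥ t} (|B ∩ A| − t + 1)`, summed with
multiplicity of blocks. -/
def designT {n : ℕ} (t : ℕ) (𝓑 : Multiset (Finset (Fin n))) (A : Finset (Fin n)) : ℕ :=
  ((𝓑.filter (fun B => t ≤ (B ∩ A).card)).map (fun B => (B ∩ A).card - t + 1)).sum

/-- The maximum of `T(A)` over all `m`-element subsets `A` of `Fin n`. -/
def designTmax {n : ℕ} (t m : ℕ) (𝓑 : Multiset (Finset (Fin n))) : ℕ :=
  (Finset.univ.filter (fun A : Finset (Fin n) => A.card = m)).sup (designT t 𝓑)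

/-!
The sum of `T_𝓑(A)` over all `m`-sets `A` splits as a sum over the blocks of `𝓑`. As permutations
of the ground set act transitively on `r`-sets, every block contributes the same amount, so the
average of `T_𝓑` over `m`-sets is proportional to the number of blocks. Two designs with the same
`t` and `r` have numbers of blocks in the ratio of their indices, so their averages are in this
ratio as well. For the complete design `𝓒` the same symmetry makes `T_𝓒` constant on `m`-sets, so
its maximum equals its average, whereas the maximum of `T_𝓑` is at least its average.
-/

open Finset
open scoped Pointwise

theorem sum_map_filter_eq_sum_map_ite {ι M : Type*} [AddCommMonoid M] (p : ι → Prop)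
    [DecidablePred p] (f : ι → M) (s : Multiset ι) :
    ((s.filter p).map f).sum = (s.map fun a => if p a then f a else 0).sum := by
  induction s using Multiset.induction_on with
  | empty => simp
  | cons a s ih => by_cases h : p a <;> simp [h, ih]

section BlockDesign

variable {α : Type*} [DecidableEq α]

/-- An `S_lam(t, r, n)` block design on a ground set `α`, whose cardinality is `n`. -/
structure IsBlockDesign (lam t r : ℕ) (𝓑 : Multiset (Finset α)) : Prop where
  card_eq : ∀ B ∈ 𝓑, #B = r
  card_filter_subset : ∀ T : Finset α, #T = t → (𝓑.filter (T ⊆ ·)).card = lam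

/-- The complete block design of all `r`-subsets of `α`; a multiset rather than a finset, so that it
can be compared with arbitrary designs. -/
def completeDesign (α : Type*) [Fintype α] (r : ℕ) : Multiset (Finset α) :=
  (univ.powersetCard r : Finset (Finset α)).val

theorem isBlockDesign_completeDesign [Fintype α] {t r : ℕ} (htr : t ≤ r) :
    IsBlockDesign ((Fintype.card α - t).choose (r - t)) t r (completeDesign α r) where
  card_eq _ hB := (mem_powersetCard.mp hB).2
  card_filter_subset := by
    rintro T rfl
    exact card_filter_powersetCard_subset T univ r (subset_univ T) htr

theorem sum_card_filter_subset_eq_sum_choose [Fintype α] (t : ℕ) (𝓑 : Multiset (Finset α)) :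
    ∑ T ∈ univ.powersetCard t, (𝓑.filter (T ⊆ ·)).card = (𝓑.map fun B => (#B).choose t).sum := by
  have card_subsets (B : Finset α) :
      ∑ T ∈ univ.powersetCard t, (if T ⊆ B then 1 else 0) = (#B).choose t := by
    rw [← card_filter, ← card_powersetCard]
    congr 1
    ext T
    simp [mem_powersetCard, and_comm]
  have card_blocks (T : Finset α) :
      (𝓑.filter (T ⊆ ·)).card = (𝓑.map fun B => if T ⊆ B then 1 else 0).sum := by
    simp [← sum_map_filter_eq_sum_map_ite]
  simp only [card_blocks, ← card_subsets]
  exact (Multiset.sum_map_sum_map 𝓑 (univ.powersetCard t).val).symm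

namespace IsBlockDesign

variable {lam mu t r : ℕ} {𝓑 𝓒 : Multiset (Finset α)}

theorem card_mul_choose [Fintype α] (h𝓑 : IsBlockDesign lam t r 𝓑) :
    𝓑.card * r.choose t = lam * (Fintype.card α).choose t := by
  calc 𝓑.card * r.choose t
      = (𝓑.map fun B => (#B).choose t).sum := by
        rw [Multiset.map_congr rfl fun B hB => by rw [h𝓑.card_eq B hB]]
        simp
    _ = ∑ T ∈ univ.powersetCard t, (𝓑.filter (T ⊆ ·)).card :=
        (sum_card_filter_subset_eq_sum_choose t 𝓑).symm
    _ = ∑ _ ∈ (univ : Finset α).powersetCard t, lam :=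
        sum_congr rfl fun T hT => h𝓑.card_filter_subset T (mem_powersetCard.mp hT).2
    _ = lam * (Fintype.card α).choose t := by simp [mul_comm]

theorem mul_card_eq_mul_card [Finite α] (h𝓑 : IsBlockDesign lam t r 𝓑)
    (h𝓒 : IsBlockDesign mu t r 𝓒) (htr : t ≤ r) : mu * 𝓑.card = lam * 𝓒.card := by
  have := Fintype.ofFinite α
  apply Nat.eq_of_mul_eq_mul_right (Nat.choose_pos htr)
  rw [mul_assoc, mul_assoc, h𝓑.card_mul_choose, h𝓒.card_mul_choose, mul_left_comm]

end IsBlockDesign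

end BlockDesign

section IntersectionWeight

variable {α M : Type*} [DecidableEq α] [AddCommMonoid M]

/-- The sum of `w |B ∩ A|` over the blocks `B` of `𝓑`, generalizing `T_𝓑(A)` to an arbitrary
weight `w`. -/
def intersectionWeight (w : ℕ → M) (𝓑 : Multiset (Finset α)) (A : Finset α) : M :=
  (𝓑.map fun B => w #(B ∩ A)).sum

theorem exists_perm_smul_eq_of_card_eq {X Y : Finset α} (h : #X = #Y) :
    ∃ σ : Equiv.Perm α, σ • X = Y := by
  obtain ⟨σ, hσ⟩ := Set.powersetCard.isPretransitive.exists_smul_eq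
    (⟨X, h⟩ : Set.powersetCard α #Y) ⟨Y, rfl⟩
  exact ⟨σ, congrArg Subtype.val hσ⟩

variable [Fintype α]

theorem sum_powersetCard_inter_congr (w : ℕ → M) (k : ℕ) {X Y : Finset α} (h : #X = #Y) :
    ∑ Z ∈ univ.powersetCard k, w #(X ∩ Z) = ∑ Z ∈ univ.powersetCard k, w #(Y ∩ Z) := by
  obtain ⟨σ, rfl⟩ := exists_perm_smul_eq_of_card_eq h
  refine sum_equiv (MulAction.toPerm σ) (by simp [mem_powersetCard]) fun Z _ => ?_
  rw [MulAction.toPerm_apply, ← smul_finset_inter, card_smul_finset]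

theorem intersectionWeight_completeDesign_congr (w : ℕ → M) (r : ℕ) {A A' : Finset α}
    (h : #A = #A') :
    intersectionWeight w (completeDesign α r) A = intersectionWeight w (completeDesign α r) A' := by
  simp only [intersectionWeight, inter_comm _ A, inter_comm _ A']
  exact sum_powersetCard_inter_congr w r h

theorem exists_sum_intersectionWeight_eq (α : Type*) [DecidableEq α] [Fintype α] (w : ℕ → M)
    (m : ℕ) :
    ∃ c : ℕ → M, ∀ 𝓑 : Multiset (Finset α),
      ∑ A ∈ univ.powersetCard m, intersectionWeight w 𝓑 A = (𝓑.map fun B => c #B).sum := by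
  obtain ⟨c, hc⟩ := (Function.factorsThrough_iff _).mp fun X Y : Finset α =>
    sum_powersetCard_inter_congr w m (X := X) (Y := Y)
  refine ⟨c, fun 𝓑 => ?_⟩
  calc ∑ A ∈ univ.powersetCard m, intersectionWeight w 𝓑 A
      = (𝓑.map fun B => ∑ A ∈ univ.powersetCard m, w #(B ∩ A)).sum :=
        (Multiset.sum_map_sum_map 𝓑 (univ.powersetCard m).val).symm
    _ = (𝓑.map fun B => c #B).sum := by rw [hc]; rfl

theorem IsBlockDesign.nsmul_sum_intersectionWeight_eq {lam mu t r : ℕ}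
    {𝓑 𝓒 : Multiset (Finset α)} (h𝓑 : IsBlockDesign lam t r 𝓑) (h𝓒 : IsBlockDesign mu t r 𝓒)
    (htr : t ≤ r) (w : ℕ → M) (m : ℕ) :
    mu • ∑ A ∈ univ.powersetCard m, intersectionWeight w 𝓑 A =
      lam • ∑ A ∈ univ.powersetCard m, intersectionWeight w 𝓒 A := by
  obtain ⟨c, hc⟩ := exists_sum_intersectionWeight_eq α w m
  have sum_eq {nu : ℕ} {𝓓 : Multiset (Finset α)} (h𝓓 : IsBlockDesign nu t r 𝓓) :
      ∑ A ∈ univ.powersetCard m, intersectionWeight w 𝓓 A = 𝓓.card • c r := by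
    rw [hc, Multiset.map_congr rfl fun B hB => by rw [h𝓓.card_eq B hB]]
    simp
  rw [sum_eq h𝓑, sum_eq h𝓒, ← mul_nsmul', ← mul_nsmul', h𝓑.mul_card_eq_mul_card h𝓒 htr]

theorem stmt0_general [LinearOrder M] [IsOrderedCancelAddMonoid M] {lam t r : ℕ}
    {𝓑 : Multiset (Finset α)} (h𝓑 : IsBlockDesign lam t r 𝓑) (htr : t ≤ r) (w : ℕ → M)
    (A' : Finset α) :
    ∃ A, #A = #A' ∧ lam • intersectionWeight w (completeDesign α r) A' ≤
      (Fintype.card α - t).choose (r - t) • intersectionWeight w 𝓑 A := by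
  have nonempty : (univ.powersetCard #A' : Finset (Finset α)).Nonempty :=
    ⟨A', mem_powersetCard_univ.mpr rfl⟩
  obtain ⟨A, hA, hle⟩ := exists_le_of_sum_le nonempty <| by
    simpa only [smul_sum] using
      (h𝓑.nsmul_sum_intersectionWeight_eq (isBlockDesign_completeDesign htr) htr w #A').ge
  have hcard : #A = #A' := mem_powersetCard_univ.mp hA
  exact ⟨A, hcard, intersectionWeight_completeDesign_congr w r hcard ▸ hle⟩

end IntersectionWeight

theorem designT_eq_intersectionWeight {n : ℕ} (t : ℕ) (𝓑 : Multiset (Finset (Fin n)))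
    (A : Finset (Fin n)) :
    designT t 𝓑 A = intersectionWeight (fun k => if t ≤ k then k - t + 1 else 0) 𝓑 A :=
  sum_map_filter_eq_sum_map_ite _ _ 𝓑

theorem mul_designTmax_le_mul_designTmax {n t m a b : ℕ} {𝓑 𝓒 : Multiset (Finset (Fin n))}
    (h : ∀ A', ∃ A, #A = #A' ∧ a * designT t 𝓒 A' ≤ b * designT t 𝓑 A) :
    a * designTmax t m 𝓒 ≤ b * designTmax t m 𝓑 := by
  rw [designTmax, apply_sup_eq_sup_comp (a * ·) (fun _ _ => (Nat.mul_max_mul_left ..).symm)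
    (mul_zero a)]
  refine Finset.sup_le fun A' hA' => ?_
  obtain ⟨A, hcard, hle⟩ := h A'
  have hA : A ∈ univ.filter (#· = m) := by simpa [hcard] using hA'
  exact hle.trans (Nat.mul_le_mul_left b (le_sup (f := designT t 𝓑) hA))

theorem stmt0 (t r n m lam : ℕ) (ht : 1 ≤ t) (htr : t ≤ r) (hrn : r ≤ n)
    (hm1 : 1 ≤ m) (hmn : m ≤ n) (hlam : 1 ≤ lam)
    (𝓑 : Multiset (Finset (Fin n)))
    (hBcard : ∀ B ∈ 𝓑, B.card = r)
    (hBdes : ∀ T : Finset (Fin n), T.card = t →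
      Multiset.card (𝓑.filter (fun B => T ⊆ B)) = lam) :
    (n - t).choose (r - t) * designTmax t m 𝓑 ≥
      lam * designTmax t m ((Finset.univ.powersetCard r : Finset (Finset (Fin n))).val) :=
  mul_designTmax_le_mul_designTmax fun A' => by
    simpa [designT_eq_intersectionWeight, completeDesign] using
      stmt0_general ⟨hBcard, hBdes⟩ htr (fun k => if t ≤ k then k - t + 1 else 0) A'
end

section
/- Let F be a finite field with q elements, let M ≥ 1 and T ≥ 1 be natural numbers, and let (Q_i)_{i ∈ I} be a finite family of M × (M+T) matrices over F indexed by a finite set I. For a T × M matrix S over F, let G(S) denote the (M+T) × M matrix whose top M rows form the M × M identity matrix and whose bottom T rows form S. Suppose that for each i ∈ I there exists some T × M matrix S over F such that the M × M matrix Q_i · G(S) is invertible. Then the number of T × M matrices S over F for which Q_i · G(S) is singular for at least one i ∈ I is at most |I| · T · M · q^{TM−1}. -/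
/-- The `(M+T) × M` matrix whose top `M` rows form the identity matrix and whose
bottom `T` rows form `S`. -/
def stackIdAbove {F : Type*} [Field F] (M T : ℕ) (S : Matrix (Fin T) (Fin M) F) :
    Matrix (Fin (M + T)) (Fin M) F :=
  Matrix.of fun i j =>
    if h : (i : ℕ) < M then (if (i : ℕ) = (j : ℕ) then 1 else 0)
    else S ⟨(i : ℕ) - M, by have := i.isLt; omega⟩ j

/-!
As a polynomial in the entries of `S`, the determinant of the `M × M` matrix `Q i * G(S)` has
total degree at most `M`, since the entries of `G(S)` have degree at most one, and it is nonzero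
because it does not vanish at the given witness. Over an integral domain the product over `i` of
these polynomials is therefore a nonzero polynomial of degree at most `|I| * M`, and it vanishes at
`S` exactly when some `Q i * G(S)` is singular. A single application of the Schwartz–Zippel lemma to
the product replaces the union bound over `i` and bounds the number of such `S` with entries in any
finite set `E` by `|I| * M * |E| ^ (T * M - 1)`.
-/

section SchwartzZippel

open Finset MvPolynomial

theorem card_filter_eval_eq_zero_le {R σ : Type*} [CommRing R] [IsDomain R] [DecidableEq R]
    [Fintype σ] [DecidableEq σ] {p : MvPolynomial σ R} (hp : p ≠ 0) (E : Finset R) :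
    #{x ∈ Fintype.piFinset fun _ : σ => E | eval x p = 0} ≤
      p.totalDegree * #E ^ (Fintype.card σ - 1) := by
  -- Without variables the exponent truncates to `0`, but a nonzero constant has no zeros.
  cases isEmpty_or_nonempty σ with
  | inl _ =>
    rw [p.eq_C_of_isEmpty] at hp ⊢
    simp [C_ne_zero.mp hp]
  | inr _ =>
    obtain rfl | hE := E.eq_empty_or_nonempty
    · simp
    let e := Fintype.equivFin σ
    have card_zeros_rename : #{x ∈ Fintype.piFinset fun _ : σ => E | eval x p = 0} =
        #{y ∈ Fintype.piFinset fun _ => E | eval y (renameEquiv R e p) = 0} :=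
      card_equiv (e.arrowCongr (Equiv.refl R)) fun x => by
        simp [eval_rename, Function.comp_def, Equiv.arrowCongr, e.symm.forall_congr_left]
    have schwartz_zippel :=
      schwartz_zippel_totalDegree (EmbeddingLike.map_ne_zero_iff (f := renameEquiv R e) |>.mpr hp) E
    have hE_pos : (0 : ℚ≥0) < #E := by exact_mod_cast hE.card_pos
    rw [totalDegree_renameEquiv, ← card_zeros_rename,
      div_le_div_iff₀ (by positivity) hE_pos, ← pow_sub_one_mul Fintype.card_ne_zero,
      ← mul_assoc, mul_le_mul_iff_left₀ hE_pos] at schwartz_zippel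
    exact_mod_cast schwartz_zippel

theorem card_filter_eval_matrix_eq_zero_le {R m n : Type*} [CommRing R] [IsDomain R]
    [DecidableEq R] [Fintype m] [DecidableEq m] [Fintype n] [DecidableEq n]
    {p : MvPolynomial (m × n) R} (hp : p ≠ 0) (E : Finset R) :
    #{S ∈ Fintype.piFinset fun _ : m => Fintype.piFinset fun _ : n => E |
        eval (fun x => S x.1 x.2) p = 0} ≤
      p.totalDegree * #E ^ (Fintype.card m * Fintype.card n - 1) := by
  rw [← Fintype.card_prod]
  refine (card_equiv (Equiv.curry m n R).symm fun S => ?_).trans_le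
    (card_filter_eval_eq_zero_le hp E)
  simp [Function.uncurry_def]

end SchwartzZippel

section Determinant

open Matrix MvPolynomial

variable {R σ m n : Type*}

theorem totalDegree_prod_le [CommSemiring R] {ι : Type*} [Fintype ι] {d : ℕ}
    {f : ι → MvPolynomial σ R} (hf : ∀ i, (f i).totalDegree ≤ d) :
    (∏ i, f i).totalDegree ≤ Fintype.card ι * d :=
  calc (∏ i, f i).totalDegree
      ≤ ∑ i, (f i).totalDegree := totalDegree_finsetProd _ _
    _ ≤ Fintype.card ι * d := Finset.sum_le_card_nsmul _ _ d fun i _ => hf i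

theorem totalDegree_det_le [CommRing R] [Fintype m] [DecidableEq m] {d : ℕ}
    {A : Matrix m m (MvPolynomial σ R)} (hA : ∀ i j, (A i j).totalDegree ≤ d) :
    A.det.totalDegree ≤ Fintype.card m * d := by
  rw [det_apply]
  exact totalDegree_finsetSum_le fun τ _ =>
    (totalDegree_smul_le _ _).trans (totalDegree_prod_le fun i => hA (τ i) i)

theorem totalDegree_map_C_mul_apply_le [CommSemiring R] {k : Type*} [Fintype m] {d : ℕ}
    (Q : Matrix k m R) {A : Matrix m n (MvPolynomial σ R)}
    (hA : ∀ i j, (A i j).totalDegree ≤ d) (i : k) (j : n) :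
    ((Q.map (C (σ := σ)) * A) i j).totalDegree ≤ d := by
  rw [mul_apply]
  refine totalDegree_finsetSum_le fun l _ => (totalDegree_mul _ _).trans ?_
  simpa using hA l j

/-- The identity stacked above `S`: the matrix `G(S)` over arbitrary index types, where the rows of
the identity block are indexed by `Sum.inl` and those of `S` by `Sum.inr`. -/
def stackOneAbove [Zero R] [One R] [DecidableEq m] (S : Matrix n m R) :
    Matrix (m ⊕ n) m R :=
  fromRows 1 S

theorem map_stackOneAbove {R' : Type*} [NonAssocSemiring R] [NonAssocSemiring R'] [DecidableEq m]
    (f : R →+* R') (S : Matrix n m R) :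
    (stackOneAbove S).map f = stackOneAbove (S.map f) := by
  rw [stackOneAbove, fromRows_map, Matrix.map_one f (map_zero f) (map_one f), stackOneAbove]

theorem totalDegree_stackOneAbove_mvPolynomialX_le [CommSemiring R] [DecidableEq m]
    (i : m ⊕ n) (j : m) :
    (stackOneAbove (mvPolynomialX n m R) i j).totalDegree ≤ 1 := by
  rw [stackOneAbove]
  cases i with
  | inl i => rw [fromRows_apply_inl, one_apply]; split_ifs <;> simp
  | inr i => exact (isHomogeneous_X R (i, j)).totalDegree_le

variable [CommRing R] [Fintype m] [DecidableEq m] [Fintype n]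

/-- The determinant of `Q * G(S)` as a polynomial in the entries of `S`: the variable `(i, j)`
stands for `S i j`. -/
noncomputable def stackDetPoly (Q : Matrix m (m ⊕ n) R) : MvPolynomial (n × m) R :=
  (Q.map (C (σ := n × m)) * stackOneAbove (mvPolynomialX n m R)).det

theorem eval_stackDetPoly (Q : Matrix m (m ⊕ n) R) (S : Matrix n m R) :
    eval (fun x => S x.1 x.2) (stackDetPoly Q) = (Q * stackOneAbove S).det := by
  have hQ : (Q.map C).map (eval fun x : n × m => S x.1 x.2) = Q := by ext; simp
  have hS : (mvPolynomialX n m R).map (eval fun x => S x.1 x.2) = S :=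
    mvPolynomialX_map_eval₂ (RingHom.id R) S
  rw [stackDetPoly, RingHom.map_det, RingHom.mapMatrix_apply, Matrix.map_mul, map_stackOneAbove,
    hQ, hS]

theorem stackDetPoly_ne_zero {Q : Matrix m (m ⊕ n) R} {S : Matrix n m R}
    (hS : (Q * stackOneAbove S).det ≠ 0) : stackDetPoly Q ≠ 0 := fun h =>
  hS (by rw [← eval_stackDetPoly, h, map_zero])

theorem totalDegree_stackDetPoly_le (Q : Matrix m (m ⊕ n) R) :
    (stackDetPoly Q).totalDegree ≤ Fintype.card m := by
  rw [← mul_one (Fintype.card m)]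
  exact totalDegree_det_le
    (totalDegree_map_C_mul_apply_le Q totalDegree_stackOneAbove_mvPolynomialX_le)

theorem stmt1_general [IsDomain R] [DecidableEq R] [DecidableEq n] {I : Type*} [Fintype I]
    (Q : I → Matrix m (m ⊕ n) R) (hex : ∀ i, ∃ S : Matrix n m R, (Q i * stackOneAbove S).det ≠ 0)
    (E : Finset R) :
    (Finset.filter (fun S => ∃ i, (Q i * stackOneAbove (of S)).det = 0)
        (Fintype.piFinset fun _ : n => Fintype.piFinset fun _ : m => E)).card ≤
      Fintype.card I * Fintype.card m * E.card ^ (Fintype.card n * Fintype.card m - 1) := by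
  have prod_ne_zero : ∏ i, stackDetPoly (Q i) ≠ 0 :=
    Finset.prod_ne_zero_iff.mpr fun i _ => (hex i).elim fun _ => stackDetPoly_ne_zero
  have singular_iff (S : n → m → R) : (∃ i, (Q i * stackOneAbove (of S)).det = 0) ↔
      eval (fun x => S x.1 x.2) (∏ i, stackDetPoly (Q i)) = 0 := by
    simp [map_prod, Finset.prod_eq_zero_iff, ← eval_stackDetPoly]
  simp only [singular_iff]
  exact (card_filter_eval_matrix_eq_zero_le prod_ne_zero E).trans
    (Nat.mul_le_mul_right _ (totalDegree_prod_le fun i => totalDegree_stackDetPoly_le (Q i)))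

end Determinant

theorem stackIdAbove_eq_submatrix {F : Type*} [Field F] {M T : ℕ}
    (S : Matrix (Fin T) (Fin M) F) :
    stackIdAbove M T S = (stackOneAbove S).submatrix finSumFinEquiv.symm id := by
  ext i j
  refine Fin.addCases (fun i => ?_) (fun i => ?_) i
  · simp [stackIdAbove, stackOneAbove, Matrix.one_apply, Fin.ext_iff]
  · simp [stackIdAbove, stackOneAbove]

theorem mul_stackIdAbove {F : Type*} [Field F] {M T : ℕ} {k : Type*}
    (Q : Matrix k (Fin (M + T)) F) (S : Matrix (Fin T) (Fin M) F) :
    Q * stackIdAbove M T S = Q.submatrix id finSumFinEquiv * stackOneAbove S := by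
  rw [stackIdAbove_eq_submatrix]
  simpa using Matrix.submatrix_mul_equiv (Q.submatrix id finSumFinEquiv) (stackOneAbove S)
    id finSumFinEquiv.symm id

theorem stmt1 (F : Type*) [Field F] [Fintype F] [DecidableEq F] (q M T : ℕ)
    (hq : Fintype.card F = q) (hM : 1 ≤ M) (hT : 1 ≤ T)
    (I : Type*) [Fintype I]
    (Q : I → Matrix (Fin M) (Fin (M + T)) F)
    (hex : ∀ i : I, ∃ S : Matrix (Fin T) (Fin M) F, (Q i * stackIdAbove M T S).det ≠ 0) :
    (Finset.univ.filter (fun S : Matrix (Fin T) (Fin M) F =>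
        ∃ i : I, (Q i * stackIdAbove M T S).det = 0)).card ≤
      Fintype.card I * T * M * q ^ (T * M - 1) := by
  simp only [mul_stackIdAbove] at hex ⊢
  have card_le := stmt1_general _ hex Finset.univ
  simp only [Fintype.piFinset_univ, Fintype.card_fin, Finset.card_univ, hq] at card_le
  exact card_le.trans (by gcongr; exact Nat.le_mul_of_pos_right _ hT)
end

section
/- Let F be a field and let r ≥ 2 and N ≥ 1 be natural numbers. Let R be the r × (r−1) matrix over F whose top r−1 rows form the (r−1) × (r−1) identity matrix and whose last row is the all-ones row. For each j ∈ {1,…,N}, let Z_j be a nonempty subset of the row indices {1,…,r}, and let R_j be the matrix obtained from R by replacing each row with index in Z_j by the zero row. Let Q be the (rN) × ((r−1)N) block-diagonal matrix with diagonal blocks R_1, …, R_N. Set M = rN − Σ_{j=1}^N |Z_j| (the total number of rows not zeroed out) and T = (r−1)N − M. Then there exists a T × M matrix S over F such that the matrix Q · G(S) has rank M, where G(S) is the ((r−1)N) × M matrix whose top M rows form the M × M identity matrix and whose bottom T rows form S. -/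
/-- The `a × M` matrix whose top `M` rows form the identity matrix and whose
bottom `a - M` rows form `S` (assuming `M ≤ a`). -/
def idAboveS {F : Type*} [Field F] (a M : ℕ) (S : Matrix (Fin (a - M)) (Fin M) F) :
    Matrix (Fin a) (Fin M) F :=
  Matrix.of fun i j =>
    if h : (i : ℕ) < M then (if (i : ℕ) = (j : ℕ) then 1 else 0)
    else S ⟨(i : ℕ) - M, by have := i.isLt; omega⟩ j

/-!
Split `Q = [Q₁ | Q₂]` into its first `M` and last `T` columns, so that `Q * G(S) = Q₁ + Q₂ * S`.
Such a correction of `Q₁` can be given full column rank as soon as `Q` has rank at least `M`: the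
kernel of `Q₁` is then small enough to be sent injectively into a complement of the column space
of `Q₁` inside that of `Q`. The rank of `Q` is the sum of the ranks of its blocks. The left kernel
of `R` is the line spanned by `(-1, …, -1, 1)`, none of whose coordinates vanish, so any proper
subset of the rows of `R` is linearly independent; the `r - |Z_j|` rows that survive in `R_j` are
such a subset.
-/

open Module

section LinearMaps

variable {K V U W : Type*} [DivisionRing K] [AddCommGroup V] [Module K V]
  [AddCommGroup U] [Module K U] [AddCommGroup W] [Module K W]

theorem exists_le_disjoint_finrank_add_finrank_eq [FiniteDimensional K W] (p q : Submodule K W) :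
    ∃ c ≤ q, Disjoint p c ∧ finrank K p + finrank K c = finrank K ↥(p ⊔ q) := by
  obtain ⟨c, hdisj, hsup⟩ := IsModularLattice.exists_disjoint_and_sup_eq
    (inf_le_right : p ⊓ q ≤ q)
  have hcq : c ≤ q := le_sup_right.trans_eq hsup
  have hpc : Disjoint p c := by
    rw [disjoint_iff, ← inf_eq_right.2 hcq, ← inf_assoc]
    exact hdisj.eq_bot
  have hpq : p ⊔ c = p ⊔ q := by rw [← hsup, ← sup_assoc, sup_inf_self]
  refine ⟨c, hcq, hpc, ?_⟩
  rw [← hpq, ← Submodule.finrank_sup_add_finrank_inf_eq, hpc.eq_bot, finrank_bot, add_zero]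

theorem exists_injective_add_comp [FiniteDimensional K V] [FiniteDimensional K W]
    (A : V →ₗ[K] W) (B : U →ₗ[K] W) (h : finrank K V ≤ finrank K ↥(A.range ⊔ B.range)) :
    ∃ S : V →ₗ[K] U, Function.Injective (A + B ∘ₗ S) := by
  obtain ⟨C, hCB, hAC, hC⟩ := exists_le_disjoint_finrank_add_finrank_eq A.range B.range
  have hker : finrank K A.ker ≤ finrank K C := by
    have := A.finrank_range_add_finrank_ker
    omega
  obtain ⟨e, he⟩ := finrank_le_iff_exists_linearMap.1 hker
  obtain ⟨P, hP⟩ := A.ker.subtype.exists_leftInverse_of_injective A.ker.ker_subtype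
  obtain ⟨g, hg⟩ := projective_lifting_property B.rangeRestrict
    (Submodule.inclusion hCB) B.surjective_rangeRestrict
  have hBg (c : C) : B (g c) = c := congrArg Subtype.val (LinearMap.congr_fun hg c)
  refine ⟨g ∘ₗ e ∘ₗ P, (injective_iff_map_eq_zero _).2 fun v hv => ?_⟩
  replace hv : A v + e (P v) = 0 := by simpa [hBg] using hv
  have heP : (e (P v) : W) = 0 := by
    refine Submodule.disjoint_def.1 hAC _ ?_ (e (P v)).2
    rw [← neg_eq_of_add_eq_zero_right hv]
    exact neg_mem (A.mem_range_self v)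
  have hPv : P v = 0 := he (by simpa using heP)
  have hAv : v ∈ A.ker := by simpa [heP] using hv
  have hPv' : P v = ⟨v, hAv⟩ := LinearMap.congr_fun hP ⟨v, hAv⟩
  exact congrArg Subtype.val (hPv'.symm.trans hPv)

theorem finrank_range_piMap {ι : Type*} [Fintype ι] {V W : ι → Type*}
    [∀ i, AddCommGroup (V i)] [∀ i, Module K (V i)]
    [∀ i, AddCommGroup (W i)] [∀ i, Module K (W i)] [∀ i, FiniteDimensional K (W i)]
    (f : ∀ i, V i →ₗ[K] W i) :
    finrank K (LinearMap.piMap f).range = ∑ i, finrank K (f i).range := by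
  have hf : LinearMap.piMap f = LinearMap.piMap (fun i => (f i).range.subtype) ∘ₗ
      LinearMap.piMap fun i => (f i).rangeRestrict := rfl
  have hsurj : Function.Surjective (LinearMap.piMap fun i => (f i).rangeRestrict) :=
    Function.Surjective.piMap fun i => (f i).surjective_rangeRestrict
  have hinj : Function.Injective (LinearMap.piMap fun i => (f i).range.subtype) :=
    Function.Injective.piMap fun _ => Subtype.val_injective
  rw [hf, LinearMap.range_comp_of_range_eq_top _ (LinearMap.range_eq_top.2 hsurj),
    LinearMap.finrank_range_of_inj hinj, finrank_pi_fintype]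

end LinearMaps

section Rank

open Matrix

variable {F m n p o : Type*} [Field F]

theorem rank_blockDiagonal [Finite m] [Fintype n] [Fintype o] [DecidableEq o]
    (A : o → Matrix m n F) : (blockDiagonal A).rank = ∑ k, (A k).rank := by
  let splitRows : (m × o → F) ≃ₗ[F] (o → m → F) :=
    LinearEquiv.funCongrLeft F F (Equiv.prodComm o m) ≪≫ₗ LinearEquiv.curry F F o m
  let splitCols : (n × o → F) ≃ₗ[F] (o → n → F) :=
    LinearEquiv.funCongrLeft F F (Equiv.prodComm o n) ≪≫ₗ LinearEquiv.curry F F o n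
  have hA : splitRows.toLinearMap ∘ₗ (blockDiagonal A).mulVecLin =
      LinearMap.piMap (fun k => (A k).mulVecLin) ∘ₗ splitCols.toLinearMap := by
    refine LinearMap.ext fun v => funext fun k => funext fun i => ?_
    change ∑ j, blockDiagonal A (i, k) j * v j = ∑ j, A k i j * v (j, k)
    simp [Fintype.sum_prod_type, blockDiagonal_apply, ite_mul]
  calc finrank F (blockDiagonal A).mulVecLin.range
      = finrank F (splitRows.toLinearMap ∘ₗ (blockDiagonal A).mulVecLin).range := by
        rw [LinearMap.range_comp]
        exact (splitRows.finrank_map_eq _).symm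
    _ = finrank F (LinearMap.piMap fun k => (A k).mulVecLin).range := by
        rw [hA, LinearMap.range_comp_of_range_eq_top _ splitCols.range]
    _ = ∑ k, (A k).rank := finrank_range_piMap _

theorem card_le_rank_of_linearIndepOn_row [Fintype n] {A : Matrix m n F} {s : Finset m}
    (h : LinearIndepOn F A.row s) : s.card ≤ A.rank := by
  have hs : (A.submatrix ((↑) : s → m) id).rank = s.card :=
    (LinearIndependent.rank_matrix h).trans (Fintype.card_coe s)
  exact hs ▸ A.rank_submatrix_le _ _

theorem range_mulVecLin_fromCols [Fintype n] [Fintype p] (A : Matrix m n F) (B : Matrix m p F) :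
    (fromCols A B).mulVecLin.range = A.mulVecLin.range ⊔ B.mulVecLin.range := by
  have hcol : (fromCols A B).col = Sum.elim A.col B.col := by
    ext (j | j) i <;> rfl
  simp only [range_mulVecLin, hcol, Set.Sum.elim_range, Submodule.span_union]

theorem exists_rank_add_mul_eq_card [Finite m] [Fintype n] [Fintype p]
    (A : Matrix m n F) (B : Matrix m p F) (h : Fintype.card n ≤ (fromCols A B).rank) :
    ∃ S : Matrix p n F, (A + B * S).rank = Fintype.card n := by
  classical
  obtain ⟨S, hS⟩ := exists_injective_add_comp A.mulVecLin B.mulVecLin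
    (by rwa [finrank_fintype_fun_eq_card, ← range_mulVecLin_fromCols])
  have hAS : (A + B * LinearMap.toMatrix' S).mulVecLin = A.mulVecLin + B.mulVecLin ∘ₗ S := by
    rw [mulVecLin_add, mulVecLin_mul, ← toLin'_apply' (LinearMap.toMatrix' S), toLin'_toMatrix']
  exact ⟨LinearMap.toMatrix' S, by
    rw [rank, hAS, LinearMap.finrank_range_of_inj hS, finrank_fintype_fun_eq_card]⟩

theorem exists_rank_mul_idAboveS [Finite m] {a M : ℕ} (Q : Matrix m (Fin a) F)
    (hM : M ≤ Q.rank) :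
    ∃ S : Matrix (Fin (a - M)) (Fin M) F, (Q * idAboveS a M S).rank = M := by
  have hMa : M ≤ a := by simpa using hM.trans Q.rank_le_card_width
  let e : Fin M ⊕ Fin (a - M) ≃ Fin a := finSumFinEquiv.trans (finCongr (Nat.add_sub_of_le hMa))
  have hG (S : Matrix (Fin (a - M)) (Fin M) F) :
      (idAboveS a M S).submatrix e id = fromRows 1 S := by
    ext (i | i) j <;> simp [e, idAboveS, one_apply, Fin.ext_iff]
  obtain ⟨Q₁, Q₂, hQ⟩ : ∃ Q₁ Q₂, Q.submatrix id e = fromCols Q₁ Q₂ :=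
    ⟨_, _, (fromCols_toCols _).symm⟩
  have hrank : M ≤ (fromCols Q₁ Q₂).rank := by
    rwa [← hQ, ← Equiv.coe_refl, rank_submatrix]
  obtain ⟨S, hS⟩ := exists_rank_add_mul_eq_card Q₁ Q₂ (by rwa [Fintype.card_fin])
  have hQG : Q * idAboveS a M S = Q₁ + Q₂ * S :=
    calc Q * idAboveS a M S = Q.submatrix id e * (idAboveS a M S).submatrix e id := by
          rw [submatrix_mul_equiv, submatrix_id_id]
      _ = Q₁ + Q₂ * S := by rw [hQ, hG, fromCols_mul_fromRows, Matrix.mul_one]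
  exact ⟨S, by rw [hQG, hS, Fintype.card_fin]⟩

end Rank

/-- The matrix obtained from `A` by replacing the rows with index in `Z` by zero rows; it turns the
template `R` into the blocks `R_j`. -/
def zeroRows {α m n : Type*} [Zero α] [DecidableEq m] (Z : Finset m) (A : Matrix m n α) :
    Matrix m n α :=
  Matrix.of fun i j => if i ∈ Z then 0 else A i j

/-- The template matrix `R` with `r = n + 1` rows, the identity on top of an all-ones row: the
(transposed) generator matrix of the single parity check code. -/
def parityMatrix (α : Type*) [Zero α] [One α] (n : ℕ) : Matrix (Fin (n + 1)) (Fin n) α :=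
  Matrix.of fun i j => if i = j.castSucc ∨ i = Fin.last n then 1 else 0

section ParityMatrix

open Matrix

variable {α F : Type*} [Ring α] [Field F] {n : ℕ}

theorem vecMul_parityMatrix (y : Fin (n + 1) → α) (j : Fin n) :
    (y ᵥ* parityMatrix α n) j = y j.castSucc + y (Fin.last n) := by
  simp [vecMul, dotProduct, parityMatrix, Fin.sum_univ_castSucc]

theorem eq_zero_of_vecMul_parityMatrix_eq_zero {y : Fin (n + 1) → α}
    (hy : y ᵥ* parityMatrix α n = 0) {z : Fin (n + 1)} (hz : y z = 0) : y = 0 := by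
  have hneg (j : Fin n) : y j.castSucc = -y (Fin.last n) :=
    eq_neg_of_add_eq_zero_left (by rw [← vecMul_parityMatrix, hy, Pi.zero_apply])
  have hlast : y (Fin.last n) = 0 := by
    cases z using Fin.lastCases with
    | last => exact hz
    | cast j => rwa [hneg, neg_eq_zero] at hz
  funext i
  cases i using Fin.lastCases with
  | last => exact hlast
  | cast j => rw [hneg, hlast, neg_zero, Pi.zero_apply]

theorem linearIndepOn_row_parityMatrix_compl_singleton (z : Fin (n + 1)) :
    LinearIndepOn α (parityMatrix α n).row {z}ᶜ := by
  refine linearIndepOn_iff.2 fun y hy hsum => DFunLike.coe_injective ?_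
  have hyz : y z = 0 := Finsupp.notMem_support_iff.1 fun h => hy h rfl
  refine eq_zero_of_vecMul_parityMatrix_eq_zero ?_ hyz
  rw [vecMul_eq_sum, ← hsum, Finsupp.linearCombination_apply, Finsupp.sum_fintype _ _ (by simp)]
  rfl

theorem sub_card_le_rank_zeroRows_parityMatrix {Z : Finset (Fin (n + 1))} (hZ : Z.Nonempty) :
    n + 1 - Z.card ≤ (zeroRows Z (parityMatrix F n)).rank := by
  obtain ⟨z, hz⟩ := hZ
  have hindep : LinearIndepOn F (parityMatrix F n).row ↑Zᶜ :=
    (linearIndepOn_row_parityMatrix_compl_singleton z).mono (by simpa using hz)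
  have hrows : Set.EqOn (parityMatrix F n).row (zeroRows Z (parityMatrix F n)).row ↑Zᶜ :=
    fun i hi => funext fun j => (if_neg (Finset.mem_compl.1 hi)).symm
  simpa [Finset.card_compl] using card_le_rank_of_linearIndepOn_row (hindep.congr hrows)

end ParityMatrix

/-- The bijection `i ↦ (i % r, i / r)`, which sends an index of a block-diagonal matrix with `N`
blocks of size `r` to its position in its block and the number of that block. The components are in
the order used by `Matrix.blockDiagonal`. -/
def finMulEquivModDiv (r N : ℕ) : Fin (r * N) ≃ Fin r × Fin N :=
  ((finCongr (Nat.mul_comm r N)).trans finProdFinEquiv.symm).trans (Equiv.prodComm _ _)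

theorem stmt2 (F : Type*) [Field F] (r N : ℕ) (hr : 2 ≤ r) (hN : 1 ≤ N)
    (Z : Fin N → Finset (Fin r)) (hZ : ∀ j, (Z j).Nonempty) :
    -- the template matrix `R` : identity on top, all-ones last row
    let R : Matrix (Fin r) (Fin (r - 1)) F := Matrix.of fun i j =>
      if (i : ℕ) < r - 1 then (if (i : ℕ) = (j : ℕ) then 1 else 0) else 1
    -- `R j` with the rows indexed by `Z j` zeroed out
    let Rz : Fin N → Matrix (Fin r) (Fin (r - 1)) F := fun k =>
      Matrix.of fun i j => if i ∈ Z k then 0 else R i j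
    -- the `(rN) × ((r-1)N)` block-diagonal matrix with blocks `Rz 1, …, Rz N`
    let Q : Matrix (Fin (r * N)) (Fin ((r - 1) * N)) F := Matrix.of fun i j =>
      if (i : ℕ) / r = (j : ℕ) / (r - 1) then
        Rz ⟨(i : ℕ) / r, by
              have := i.isLt
              exact (Nat.div_lt_iff_lt_mul (by omega)).mpr (Nat.lt_of_lt_of_eq this (Nat.mul_comm r N))⟩
           ⟨(i : ℕ) % r, Nat.mod_lt _ (by omega)⟩
           ⟨(j : ℕ) % (r - 1), Nat.mod_lt _ (by omega)⟩
      else 0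
    -- the number of rows of `Q` that are not zeroed out
    let M : ℕ := r * N - ∑ j : Fin N, (Z j).card
    ∃ S : Matrix (Fin ((r - 1) * N - M)) (Fin M) F,
      (Q * idAboveS ((r - 1) * N) M S).rank = M := by
  intro R Rz Q M
  obtain ⟨n, rfl⟩ : ∃ n, r = n + 1 := Nat.exists_eq_add_of_le' (by omega)
  have hR : R = parityMatrix F n := by
    ext i j
    cases i using Fin.lastCases with
    | last => simp [R, parityMatrix]
    | cast i => simp [R, parityMatrix, Fin.ext_iff, i.isLt.ne]
  have hQ : Q = (Matrix.blockDiagonal fun k => zeroRows (Z k) R).submatrix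
      (finMulEquivModDiv (n + 1) N) (finMulEquivModDiv n N) := by
    ext i j
    simp only [Matrix.submatrix_apply, Matrix.blockDiagonal_apply, Fin.ext_iff]
    rfl
  apply exists_rank_mul_idAboveS
  calc M = ∑ k, (n + 1 - (Z k).card) := by
        rw [Finset.sum_tsub_distrib _ fun k _ => card_finset_fin_le (Z k)]
        simp [M, Nat.mul_comm]
    _ ≤ ∑ k, (zeroRows (Z k) R).rank :=
        Finset.sum_le_sum fun k _ => hR ▸ sub_card_le_rank_zeroRows_parityMatrix (hZ k)
    _ = Q.rank := by rw [hQ, Matrix.rank_submatrix, rank_blockDiagonal]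
end

section
/- Let n, k, d be natural numbers with 1 ≤ k ≤ d ≤ n−1, and let ᾱ ≥ 0 and M̄ be real numbers satisfying M̄ ≤ Σ_{i=0}^{k−1} min(ᾱ, d−i) and M̄ ≥ (d − k + 1/2)·k. Then n·ᾱ − M̄ ≥ M̄²/(2k²) − 3/8. -/
/-!
For `α ≥ 0` the terms of the cut-set sum with `i ≤ d` are nonnegative and the later ones are
nonpositive, so the sum is largest at `k = d + 1`, where it is `∑ j ≤ d, min α j`. As `n ≥ d + 1`,
the redundancy `n α - M` is therefore at least `∑ j ≤ d, (α - j)⁺`, which is at least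
`x (x + 1) / 2` whenever `0 ≤ x ≤ min α d`. No term of the cut-set sum exceeds `min α d`, so the
average `x = M / k` qualifies.
-/

section OrderedRing

open Finset

variable {R : Type*} [Ring R] [LinearOrder R] [IsOrderedRing R]

theorem sum_range_min_sub_le_sum_range_min {α : R} (hα : 0 ≤ α) (k d : ℕ) :
    ∑ i ∈ range k, min α ((d : R) - i) ≤ ∑ j ∈ range (d + 1), min α (j : R) := by
  have hreflect :
      ∑ i ∈ range (d + 1), min α ((d : R) - i) = ∑ j ∈ range (d + 1), min α (j : R) := by
    rw [← sum_range_reflect]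
    refine sum_congr rfl fun i hi ↦ ?_
    rw [Nat.add_sub_cancel, Nat.cast_sub (mem_range_succ_iff.1 hi), sub_sub_cancel]
  rw [← hreflect]
  rcases le_total k (d + 1) with hle | hge
  · refine sum_le_sum_of_subset_of_nonneg (range_mono hle) fun i hi _ ↦ le_min hα ?_
    exact sub_nonneg.2 (Nat.mono_cast (mem_range_succ_iff.1 hi))
  · rw [← sum_range_add_sum_Ico _ hge]
    refine add_le_of_nonpos_right (sum_nonpos fun i hi ↦ min_le_of_right_le ?_)
    exact sub_nonpos.2 (Nat.mono_cast (Nat.le_of_succ_le (mem_Ico.1 hi).1))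

theorem sum_range_min_sub_le_mul_min (α d : R) (k : ℕ) :
    ∑ i ∈ range k, min α (d - i) ≤ k * min α d :=
  calc ∑ i ∈ range k, min α (d - i)
      ≤ ∑ _i ∈ range k, min α d :=
        sum_le_sum fun i _ ↦ min_le_min_left α (sub_le_self _ i.cast_nonneg)
    _ = k * min α d := by rw [sum_const, card_range, nsmul_eq_mul]

end OrderedRing

section OrderedField

open Finset

variable {K : Type*} [Field K] [LinearOrder K] [IsStrictOrderedRing K]

theorem sum_range_min_natCast_le {α x : K} {m : ℕ} (hx : 0 ≤ x) (hxα : x ≤ α) (hxm : x ≤ m) :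
    ∑ j ∈ range m, min α (j : K) ≤ m * α - x * (x + 1) / 2 := by
  induction m with
  | zero =>
    obtain rfl : x = 0 := le_antisymm (by simpa using hxm) hx
    simp
  | succ m ih =>
    push_cast at hxm ⊢
    rcases le_total x m with hle | hge
    · rw [sum_range_succ]
      linarith [ih hle, min_le_left α (m : K)]
    · have hgauss : (∑ j ∈ range (m + 1), (j : K)) * 2 = (m + 1) * m := by
        rw [← Nat.cast_sum]
        exact_mod_cast sum_range_id_mul_two (m + 1)
      have hprod : 0 ≤ (x - m) * (m + 1 - x) :=
        mul_nonneg (sub_nonneg.2 hge) (sub_nonneg.2 hxm)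
      calc ∑ j ∈ range (m + 1), min α (j : K)
          ≤ ∑ j ∈ range (m + 1), (j : K) := sum_le_sum fun _ _ ↦ min_le_right _ _
        _ ≤ (m + 1) * x - x * (x + 1) / 2 := by linarith
        _ ≤ (m + 1) * α - x * (x + 1) / 2 := by gcongr

theorem stmt6_general {n k d : ℕ} (hk : 0 < k) (hdn : d < n) {α M : K} (hM : 0 ≤ M)
    (hcut : M ≤ ∑ i ∈ range k, min α ((d : K) - i)) :
    M / k * (M / k + 1) / 2 ≤ n * α - M := by
  have hk' : (0 : K) < k := Nat.cast_pos.2 hk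
  have havg : M / k ≤ min α d :=
    (div_le_iff₀' hk').2 (hcut.trans (sum_range_min_sub_le_mul_min α d k))
  obtain ⟨havgα, havgd⟩ := le_min_iff.1 havg
  have havg_nonneg : 0 ≤ M / k := div_nonneg hM hk'.le
  have hα : 0 ≤ α := havg_nonneg.trans havgα
  have hM_le : M ≤ (d + 1 : ℕ) * α - M / k * (M / k + 1) / 2 :=
    calc M ≤ ∑ j ∈ range (d + 1), min α (j : K) :=
          hcut.trans (sum_range_min_sub_le_sum_range_min hα k d)
      _ ≤ (d + 1 : ℕ) * α - M / k * (M / k + 1) / 2 :=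
          sum_range_min_natCast_le havg_nonneg havgα (havgd.trans (Nat.cast_le.2 d.le_succ))
  have hnodes : (d + 1 : ℕ) * α ≤ n * α :=
    mul_le_mul_of_nonneg_right (Nat.cast_le.2 hdn) hα
  linarith

end OrderedField

theorem stmt6 (n k d : ℕ) (hk : 1 ≤ k) (hkd : k ≤ d) (hdn : d ≤ n - 1) (α M : ℝ)
    (hα : 0 ≤ α)
    (h1 : M ≤ ∑ i ∈ Finset.range k, min α ((d : ℝ) - (i : ℝ)))
    (h2 : M ≥ ((d : ℝ) - (k : ℝ) + 1 / 2) * (k : ℝ)) :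
    (n : ℝ) * α - M ≥ M ^ 2 / (2 * (k : ℝ) ^ 2) - 3 / 8 := by
  have hkd' : (0 : ℝ) ≤ d - k := sub_nonneg.2 (Nat.cast_le.2 hkd)
  have hM : 0 ≤ M := le_trans (by positivity) h2
  have hdn' : d < n := by omega
  have hgen := stmt6_general hk hdn' hM h1
  have havg_nonneg : 0 ≤ M / k := by positivity
  linear_combination hgen + havg_nonneg / 2
end

section
/- Let n, k, d, r be natural numbers with k ≤ d ≤ n−1 and n−d+1 ≤ r ≤ n, and set t = n−d+1. Then Σ_{i=t}^{min(n−k, r)} (i − t + 1) · C(n−k, i) · C(k, r−i) ≤ (d−k) · C(n, r). -/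
/-!
The weight `i - t + 1`, with `t = n - d + 1`, increases with `i`, and at the top index `i = n - k`
it equals `d - k`. Replacing every weight by `d - k` leaves part of the Vandermonde sum for
`n.choose r`.
-/

theorem sum_mul_le_mul_sum_of_subset {ι R : Type*} [Semiring R] [PartialOrder R]
    [IsOrderedRing R] {s t : Finset ι} {w f : ι → R} {c : R} (hst : s ⊆ t) (hc : 0 ≤ c)
    (hf : ∀ i ∈ t, 0 ≤ f i) (hw : ∀ i ∈ s, w i ≤ c) :
    ∑ i ∈ s, w i * f i ≤ c * ∑ i ∈ t, f i :=
  calc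
    ∑ i ∈ s, w i * f i ≤ ∑ i ∈ s, c * f i :=
      Finset.sum_le_sum fun i hi => mul_le_mul_of_nonneg_right (hw i hi) (hf i (hst hi))
    _ = c * ∑ i ∈ s, f i := (Finset.mul_sum ..).symm
    _ ≤ c * ∑ i ∈ t, f i :=
      mul_le_mul_of_nonneg_left
        (Finset.sum_le_sum_of_subset_of_nonneg hst fun i hi _ => hf i hi) hc

theorem sum_range_choose_mul_choose (m k r : ℕ) :
    ∑ i ∈ Finset.range (r + 1), m.choose i * k.choose (r - i) = (m + k).choose r := by
  rw [Nat.add_choose_eq, Finset.Nat.sum_antidiagonal_eq_sum_range_succ_mk]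

theorem stmt9 (n k d r : ℕ) (hkd : k ≤ d) (hdn : d ≤ n - 1)
    (hr1 : n - d + 1 ≤ r) (hrn : r ≤ n) :
    ∑ i ∈ Finset.Icc (n - d + 1) (min (n - k) r),
        (i - (n - d + 1) + 1) * (n - k).choose i * k.choose (r - i) ≤
      (d - k) * n.choose r := by
  have vandermonde : ∑ i ∈ Finset.range (r + 1), (n - k).choose i * k.choose (r - i) =
      n.choose r := by
    rw [sum_range_choose_mul_choose, Nat.sub_add_cancel (by omega)]
  have index_subset : Finset.Icc (n - d + 1) (min (n - k) r) ⊆ Finset.range (r + 1) := by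
    intro i hi
    rw [Finset.mem_Icc] at hi
    rw [Finset.mem_range]
    omega
  have weight_le : ∀ i ∈ Finset.Icc (n - d + 1) (min (n - k) r),
      i - (n - d + 1) + 1 ≤ d - k := by
    intro i hi
    rw [Finset.mem_Icc] at hi
    omega
  simp only [mul_assoc]
  rw [← vandermonde]
  exact sum_mul_le_mul_sum_of_subset index_subset (Nat.zero_le _) (fun _ _ => Nat.zero_le _)
    weight_le
end
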